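/- Let a > 0 be smooth and ℤⁿ-periodic, z smooth and ℤⁿ-periodic, P ∈ ℝⁿ, u(x) = P·x + z(x), W smooth ℤⁿ-periodic, E ∈ ℝ, and suppose (ħ²/2)Δa = a(|Du|²/2 + W − E) on ℝⁿ. Let a', z' be smooth ℤⁿ-periodic functions and Q ∈ ℝⁿ with u'(x) = Q·x + z'(x), and assume the differentiated constraints: ∫ a a' dx = 0, div(2aa'Du + a²Du') = 0 on ℝⁿ, and ∫ (2aa'Du + a²Du') dx = 0. Then the first variation of the Guerra-Morato action vanishes: ∫ ( −ħ² Da·Da' + a a' |Du|² + a² Du·Du' − 2 W a a' ) dx = 0. -/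

import Mathlib

/-!
Write `G = 2aa'Du + a²Du'`, the linearised current. The integrand of the first variation is
`-ħ² Da·Da' + Du·G - aa'|Du|² - 2Waa'`. Multiplying the Hamilton–Jacobi equation by `2a'` turns
`-aa'|Du|² - 2Waa'` into `-ħ² a'Δa - 2Eaa'`, and `Du = P + Dz`; since `div G = 0`,
the integrand equals pointwise
`div(-ħ² a'Da + zG) + P·G - 2Eaa'`.
The divergence of a periodic field integrates to zero over the unit cube
(`integral_sum_pd_eq_zero`), and the last two terms integrate to zero by the constraints
`∫ G = 0` and `∫ aa' = 0`.
-/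

open MeasureTheory

noncomputable section

/-- `ℝⁿ` with the Euclidean inner product. -/
abbrev En (n : ℕ) := EuclideanSpace ℝ (Fin n)

/-- The integer vector `k` viewed as a point of `ℝⁿ`. -/
def intVec {n : ℕ} (k : Fin n → ℤ) : En n :=
  (EuclideanSpace.equiv (Fin n) ℝ).symm (fun i => (k i : ℝ))

/-- `ℤⁿ`-periodicity for scalar functions on `ℝⁿ`. -/
def IsPeriodic {n : ℕ} (f : En n → ℝ) : Prop :=
  ∀ (x : En n) (k : Fin n → ℤ), f (x + intVec k) = f x

/-- `ℤⁿ`-periodicity for vector fields on `ℝⁿ`. -/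
def IsPeriodicV {n : ℕ} (F : En n → En n) : Prop :=
  ∀ (x : En n) (k : Fin n → ℤ), F (x + intVec k) = F x

/-- The unit cube `[0,1]ⁿ`, the fundamental domain of the torus. -/
def unitCube (n : ℕ) : Set (En n) := {x | ∀ i, x i ∈ Set.Icc (0:ℝ) 1}

/-- Euclidean dot product. -/
def dot {n : ℕ} (x y : En n) : ℝ := ∑ i, x i * y i

/-- Partial derivative in the `i`-th coordinate direction. -/
def pd {n : ℕ} (i : Fin n) (f : En n → ℝ) (x : En n) : ℝ :=
  fderiv ℝ f x (EuclideanSpace.single i 1)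

/-- The Laplacian of a scalar function. -/
def lap {n : ℕ} (f : En n → ℝ) (x : En n) : ℝ :=
  ∑ i, pd i (fun y => pd i f y) x

/-- The divergence of a vector field. -/
def dvg {n : ℕ} (F : En n → En n) (x : En n) : ℝ :=
  ∑ i, fderiv ℝ (fun y => F y i) x (EuclideanSpace.single i 1)

lemma unitCube_eq_preimage (n : ℕ) :
    unitCube n = (@WithLp.ofLp 2 (Fin n → ℝ)) ⁻¹' Set.Icc 0 1 := by
  ext x
  simp [unitCube, Pi.le_def, forall_and]

lemma isCompact_unitCube (n : ℕ) : IsCompact (unitCube n) := by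
  rw [unitCube_eq_preimage]
  exact (PiLp.homeomorph 2 (fun _ : Fin n => ℝ)).isCompact_preimage.2 isCompact_Icc

lemma integrableOn_unitCube {n : ℕ} {F : Type*} [NormedAddCommGroup F] {f : En n → F}
    (hf : Continuous f) : IntegrableOn f (unitCube n) :=
  hf.continuousOn.integrableOn_compact (isCompact_unitCube n)

lemma gradient_apply {n : ℕ} (f : En n → ℝ) (x : En n) (i : Fin n) :
    gradient f x i = pd i f x := by
  rw [pd, ← inner_gradient_left, EuclideanSpace.inner_single_right]
  simp

lemma contDiff_pd {n : ℕ} {f : En n → ℝ} (hf : ContDiff ℝ (⊤ : ℕ∞) f) (i : Fin n) :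
    ContDiff ℝ (⊤ : ℕ∞) (fun x => pd i f x) :=
  (hf.fderiv_right (m := (⊤ : ℕ∞)) (by simp)).clm_apply contDiff_const

lemma IsPeriodic.pd {n : ℕ} {f : En n → ℝ} (hf : IsPeriodic f) (i : Fin n) :
    IsPeriodic (fun x => pd i f x) := by
  intro x k
  have h : (fun y => f (y + intVec k)) = f := funext fun y => hf y k
  simp only [_root_.pd]
  rw [← fderiv_comp_add_right, h]

/-- Divergence theorem on the torus: the contributions of opposite faces of the cube cancel by
periodicity. -/
lemma integral_sum_pd_eq_zero {n : ℕ} (g : Fin n → En n → ℝ)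
    (hg : ∀ i, ContDiff ℝ (⊤ : ℕ∞) (g i)) (hper : ∀ i, IsPeriodic (g i)) :
    ∫ x in unitCube n, ∑ i, pd i (g i) x = 0 := by
  cases n with
  | zero => simp
  | succ m =>
    let eL : En (m + 1) ≃L[ℝ] (Fin (m + 1) → ℝ) := EuclideanSpace.equiv (Fin (m + 1)) ℝ
    have hvol : MeasurePreserving eL volume volume := PiLp.volume_preserving_ofLp _
    have hemb : MeasurableEmbedding eL := eL.toHomeomorph.measurableEmbedding
    have hcont : Continuous fun x => ∑ i, pd i (g i) x :=
      continuous_finsetSum _ fun i _ => (contDiff_pd (hg i) i).continuous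
    have hsingle (i : Fin (m + 1)) : eL.symm (Pi.single i 1) = EuclideanSpace.single i 1 := by
      ext j; simp [eL]
    have key := integral_divergence_of_hasFDerivAt_off_countable' (0 : Fin (m + 1) → ℝ) 1
      (zero_le_one) (fun i x => g i (eL.symm x))
      (fun i x => fderiv ℝ (g i) (eL.symm x) ∘L (eL.symm : (Fin (m + 1) → ℝ) →L[ℝ] En (m + 1)))
      ∅ Set.countable_empty
      (fun i => ((hg i).continuous.comp eL.symm.continuous).continuousOn)
      (fun x _ i => (((hg i).differentiable (by simp)) _).hasFDerivAt.comp x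
        eL.symm.hasFDerivAt)
      (by
        refine ContinuousOn.integrableOn_compact isCompact_Icc (Continuous.continuousOn ?_)
        have h := hcont.comp eL.symm.continuous
        simpa [Function.comp_def, pd, hsingle] using h)
    have hpre : ∫ x in unitCube (m + 1), ∑ i, pd i (g i) x
        = ∫ x in Set.Icc (0 : Fin (m + 1) → ℝ) 1, ∑ i, pd i (g i) (eL.symm x) := by
      rw [← hvol.setIntegral_preimage_emb hemb, unitCube_eq_preimage]
      simp only [eL.symm_apply_apply]
      rfl
    rw [hpre]
    simp only [ContinuousLinearMap.comp_apply, ContinuousLinearEquiv.coe_coe, hsingle] at key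
    refine key.trans (Finset.sum_eq_zero fun i _ => sub_eq_zero.2 ?_)
    congr 1
    ext x
    -- the front face is the back face translated by the `i`-th basis vector
    have h := hper i (eL.symm (i.insertNth (0 : ℝ) x)) (Pi.single i 1)
    simp only [Pi.zero_apply, Pi.one_apply]
    rw [← h]
    congr 1
    ext j
    refine Fin.succAboveCases i ?_ (fun k => ?_) j
    · simp [eL, intVec]
    · simp [eL, intVec]

lemma hasFDerivAt_dot {n : ℕ} (P x : En n) :
    HasFDerivAt (fun y => dot P y) (innerSL ℝ P) x := by
  have h : (fun y => dot P y) = innerSL ℝ P := by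
    ext y
    simp [dot, PiLp.inner_apply, mul_comm]
  rw [h]
  exact (innerSL ℝ P).hasFDerivAt

lemma pd_dot_add {n : ℕ} (P : En n) {z : En n → ℝ} (hz : ContDiff ℝ (⊤ : ℕ∞) z) (i : Fin n)
    (x : En n) : pd i (fun y => dot P y + z y) x = P i + pd i z x := by
  have h := (hasFDerivAt_dot P x).add ((hz.differentiable (by simp)) x).hasFDerivAt
  have h' : fderiv ℝ (fun y => dot P y + z y) x = innerSL ℝ P + fderiv ℝ z x := h.fderiv
  simp [pd, h', EuclideanSpace.inner_single_right]

lemma pd_mul {n : ℕ} {f g : En n → ℝ} (hf : ContDiff ℝ (⊤ : ℕ∞) f)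
    (hg : ContDiff ℝ (⊤ : ℕ∞) g) (i : Fin n) (x : En n) :
    pd i (fun y => f y * g y) x = pd i f x * g x + f x * pd i g x := by
  have h := ((hf.differentiable (by simp)) x).hasFDerivAt.mul
    ((hg.differentiable (by simp)) x).hasFDerivAt
  have h' : fderiv ℝ (fun y => f y * g y) x = _ := h.fderiv
  simp [pd, h']
  ring

/-- sufficiency in Theorem 2.1: if `a, u` satisfy the
Hamilton-Jacobi equation with quantum potential, the first variation of the
Guerra-Morato action vanishes for all admissible variations. -/
theorem firstVariation_eq_zero {n : ℕ} (hbar : ℝ) (h_hbar : 0 < hbar)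
    (a z W : En n → ℝ) (P : En n) (E : ℝ)
    (ha : ContDiff ℝ (⊤ : ℕ∞) a) (haper : IsPeriodic a) (hapos : ∀ x, 0 < a x)
    (hz : ContDiff ℝ (⊤ : ℕ∞) z) (hzper : IsPeriodic z)
    (hW : ContDiff ℝ (⊤ : ℕ∞) W) (hWper : IsPeriodic W)
    (u : En n → ℝ) (hu : u = fun x => dot P x + z x)
    (heig : ∀ x, hbar ^ 2 / 2 * lap a x
      = a x * (dot (gradient u x) (gradient u x) / 2 + W x - E))
    (a' z' : En n → ℝ) (Q : En n)
    (ha' : ContDiff ℝ (⊤ : ℕ∞) a') (ha'per : IsPeriodic a')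
    (hz' : ContDiff ℝ (⊤ : ℕ∞) z') (hz'per : IsPeriodic z')
    (u' : En n → ℝ) (hu' : u' = fun x => dot Q x + z' x)
    (hconstr1 : (∫ x in unitCube n, a x * a' x) = 0)
    (hconstr2 : ∀ x, dvg (fun y =>
        (2 * a y * a' y) • gradient u y + (a y) ^ 2 • gradient u' y) x = 0)
    (hconstr3 : (∫ x in unitCube n,
        ((2 * a x * a' x) • gradient u x + (a x) ^ 2 • gradient u' x)) = 0) :
    (∫ x in unitCube n,
        (-hbar ^ 2 * dot (gradient a x) (gradient a' x)
          + a x * a' x * dot (gradient u x) (gradient u x)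
          + (a x) ^ 2 * dot (gradient u x) (gradient u' x)
          - 2 * W x * a x * a' x)) = 0 := by
  have hdu (i : Fin n) (x : En n) : pd i u x = P i + pd i z x := by
    rw [hu]; exact pd_dot_add P hz i x
  have hdu' (i : Fin n) (x : En n) : pd i u' x = Q i + pd i z' x := by
    rw [hu']; exact pd_dot_add Q hz' i x
  have hdz := contDiff_pd hz
  have hdz' := contDiff_pd hz'
  have hda := contDiff_pd ha
  -- the components of the linearised current `2aa'Du + a²Du'`
  let G : Fin n → En n → ℝ := fun i x =>
    2 * a x * a' x * (P i + pd i z x) + a x ^ 2 * (Q i + pd i z' x)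
  have hGapp (i : Fin n) (x : En n) :
      ((2 * a x * a' x) • gradient u x + (a x) ^ 2 • gradient u' x) i = G i x := by
    simp [G, gradient_apply, hdu, hdu']
  have hG (i : Fin n) : ContDiff ℝ (⊤ : ℕ∞) (G i) := by
    have := hdz i
    have := hdz' i
    fun_prop
  have hGper (i : Fin n) : IsPeriodic (G i) := by
    intro x k
    simp only [G, haper x k, ha'per x k, (hzper.pd i) x k, (hz'per.pd i) x k]
  have hdivG (x : En n) : ∑ i, pd i (G i) x = 0 := by
    have h := hconstr2 x
    simp only [dvg, hGapp] at h
    exact h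
  have hcontG : Continuous fun x =>
      (2 * a x * a' x) • gradient u x + (a x) ^ 2 • gradient u' x := by
    refine (PiLp.homeomorph 2 (fun _ : Fin n => ℝ)).isInducing.continuous_iff.2
      (continuous_pi fun i => ?_)
    exact (hG i).continuous.congr fun x => (hGapp i x).symm
  have hintG (i : Fin n) : ∫ x in unitCube n, G i x = 0 := by
    have h := (EuclideanSpace.proj i : En n →L[ℝ] ℝ).integral_comp_comm
      (integrableOn_unitCube hcontG)
    rw [hconstr3, map_zero] at h
    rw [← h]
    exact integral_congr_ae (ae_of_all _ fun x => (hGapp i x).symm)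
  let F : Fin n → En n → ℝ := fun i x => (-hbar ^ 2 * a' x) * pd i a x + z x * G i x
  have hF (i : Fin n) : ContDiff ℝ (⊤ : ℕ∞) (F i) := by
    have := hda i
    have := hG i
    fun_prop
  have hFper (i : Fin n) : IsPeriodic (F i) := by
    intro x k
    simp only [F, ha'per x k, (haper.pd i) x k, hzper x k, hGper i x k]
  have hpdF (i : Fin n) (x : En n) : pd i (F i) x
      = -hbar ^ 2 * (pd i a' x * pd i a x + a' x * pd i (fun y => pd i a y) x)
        + (pd i z x * G i x + z x * pd i (G i) x) := by
    have h1 : ContDiff ℝ (⊤ : ℕ∞) (fun y => -hbar ^ 2 * a' y) := by fun_prop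
    have h2 := ((h1.mul (hda i)).differentiable (by simp) x).hasFDerivAt.add
      (((hz.mul (hG i)).differentiable (by simp)) x).hasFDerivAt
    have h3 : pd i (F i) x = pd i (fun y => (-hbar ^ 2 * a' y) * pd i a y) x
        + pd i (fun y => z y * G i y) x :=
      congrArg (fun L => L (EuclideanSpace.single i 1)) h2.fderiv
    rw [h3, pd_mul h1 (hda i), pd_mul hz (hG i), pd_mul contDiff_const ha']
    simp only [pd, fderiv_fun_const, Pi.zero_apply, _root_.zero_apply]
    ring
  have hpoint (x : En n) : -hbar ^ 2 * dot (gradient a x) (gradient a' x)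
          + a x * a' x * dot (gradient u x) (gradient u x)
          + (a x) ^ 2 * dot (gradient u x) (gradient u' x)
          - 2 * W x * a x * a' x
      = ∑ i, pd i (F i) x + ∑ i, P i * G i x - 2 * E * (a x * a' x) := by
    have hsum : ∑ i, pd i (F i) x + ∑ i, P i * G i x
        = -hbar ^ 2 * dot (gradient a x) (gradient a' x) - hbar ^ 2 * a' x * lap a x
          + 2 * a x * a' x * dot (gradient u x) (gradient u x)
          + (a x) ^ 2 * dot (gradient u x) (gradient u' x) + z x * ∑ i, pd i (G i) x := by
      simp only [dot, lap, gradient_apply, hdu, hdu', hpdF, Finset.mul_sum,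
        ← Finset.sum_add_distrib, ← Finset.sum_sub_distrib]
      refine Finset.sum_congr rfl fun i _ => ?_
      simp only [G]
      ring
    rw [hsum, hdivG]
    linear_combination (2 * a' x) * heig x
  have hI1 : IntegrableOn (fun x => ∑ i, pd i (F i) x) (unitCube n) :=
    integrableOn_unitCube
      (continuous_finsetSum _ fun i _ => (contDiff_pd (hF i) i).continuous)
  have hI2 (i : Fin n) : IntegrableOn (fun x => P i * G i x) (unitCube n) :=
    integrableOn_unitCube ((hG i).continuous.const_mul _)
  have hI3 : IntegrableOn (fun x => 2 * E * (a x * a' x)) (unitCube n) :=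
    integrableOn_unitCube ((ha.continuous.mul ha'.continuous).const_mul _)
  have hI2' : IntegrableOn (fun x => ∑ i, P i * G i x) (unitCube n) :=
    integrable_finsetSum _ fun i _ => hI2 i
  have hI12 : IntegrableOn (fun x => ∑ i, pd i (F i) x + ∑ i, P i * G i x) (unitCube n) :=
    hI1.add hI2'
  simp only [hpoint]
  rw [integral_sub hI12 hI3, integral_add hI1 hI2',
    integral_finsetSum _ fun i _ => hI2 i, integral_sum_pd_eq_zero F hF hFper]
  simp only [integral_const_mul, hintG, hconstr1]
  simp
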